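/- arXiv:2312.06811 — 4 statements merged into one kernel-verified Lean document; each statement's English description precedes it below -/
import Mathlib

section
/- If 𝒫 : 𝓜 → ℝ is lower semi-continuous and 𝒮 ⊆ 𝓜 is closed and nonempty, then there exists η* ∈ 𝒮 with 𝒫(η*) = min_{η ∈ 𝒮} 𝒫(η); that is, an optimal reinsurance treaty exists. -/
open MeasureTheory Filter Topology Set

noncomputable section

abbrev Vec (n : ℕ) : Type := Fin n → ℝ
abbrev Pt (n : ℕ) : Type := Vec n × Vec n

/-- The set `𝒜 = {(x,y) : 0 ≤ yᵢ ≤ xᵢ for all i}` on which treaties are concentrated. -/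
def treatySet (n : ℕ) : Set (Pt n) := {p | ∀ i, 0 ≤ p.2 i ∧ p.2 i ≤ p.1 i}

/-!
On `𝒜` the point `y` is dominated by `x`, so `(x, y)` can escape to infinity only if `x` does. The
mass of a treaty far away is therefore controlled by that of its fixed marginal `μ`, and the
treaties inherit tightness from `μ`. By Prokhorov's theorem a closed set of treaties is compact, and
a lower semicontinuous function attains its minimum on it.
-/

theorem tendsto_cocompact_inf_principal_of_norm_le {E F : Type*} [SeminormedAddGroup E]
    [ProperSpace E] [SeminormedAddGroup F] {f : E → F} {A : Set E}
    (hf : ∀ p ∈ A, ‖p‖ ≤ ‖f p‖) : Tendsto f (cocompact E ⊓ 𝓟 A) (cocompact F) := by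
  have norm_tendsto : Tendsto (‖·‖) (cocompact E ⊓ 𝓟 A) atTop :=
    tendsto_norm_cocompact_atTop.mono_left inf_le_left
  have norm_le : ∀ᶠ p in cocompact E ⊓ 𝓟 A, ‖p‖ ≤ ‖f p‖ :=
    mem_inf_of_right (mem_principal.2 hf)
  exact (tendsto_norm_atTop_iff_cobounded.1 (tendsto_atTop_mono' _ norm_le norm_tendsto)).mono_right
    Metric.cobounded_le_cocompact

section ConstrainedMeasures

variable {E X : Type*} [TopologicalSpace E] [MeasurableSpace E]
  [TopologicalSpace X] [MeasurableSpace X]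
  {f : E → X} {A : Set E} {T : Set (Measure X)}

theorem isTightMeasureSet_of_map_mem_of_ae_mem {S : Set (Measure E)}
    (hf : Measurable f) (hfA : Tendsto f (cocompact E ⊓ 𝓟 A) (cocompact X))
    (hT : IsTightMeasureSet T) (hST : ∀ η ∈ S, η.map f ∈ T) (hSA : ∀ η ∈ S, ∀ᵐ p ∂η, p ∈ A) :
    IsTightMeasureSet S := by
  rw [isTightMeasureSet_iff_exists_isCompact_measure_compl_le] at hT ⊢
  intro ε hε
  obtain ⟨K, hK, hKε⟩ := hT ε hε
  obtain ⟨L, hL, hLK⟩ : ∃ L, IsCompact L ∧ Lᶜ ⊆ {p | p ∈ A → f p ∈ Kᶜ} :=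
    mem_cocompact.1 (mem_inf_principal.1 (hfA hK.compl_mem_cocompact))
  refine ⟨L, hL, fun η hη ↦ ?_⟩
  calc η Lᶜ ≤ η (f ⁻¹' Kᶜ) := measure_mono_ae <| by
        filter_upwards [hSA η hη] with p hpA hpL using hLK hpL hpA
    _ ≤ η.map f Kᶜ := Measure.le_map_apply hf.aemeasurable _
    _ ≤ ε := hKε _ (hST η hη)

theorem stmt1_general [T2Space E] [BorelSpace E] {γ : Type*} [LinearOrder γ]
    (hf : Measurable f) (hfA : Tendsto f (cocompact E ⊓ 𝓟 A) (cocompact X))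
    (hT : IsTightMeasureSet T) {S : Set (ProbabilityMeasure E)}
    (hST : ∀ η ∈ S, η.toMeasure.map f ∈ T) (hSA : ∀ η ∈ S, ∀ᵐ p ∂η.toMeasure, p ∈ A)
    (hScl : IsClosed S) (hSne : S.Nonempty)
    {P : ProbabilityMeasure E → γ} (hP : LowerSemicontinuousOn P S) :
    ∃ ηs ∈ S, ∀ η ∈ S, P ηs ≤ P η := by
  have isTight_S : IsTightMeasureSet {(η : Measure E) | η ∈ S} :=
    isTightMeasureSet_of_map_mem_of_ae_mem hf hfA hT (forall_mem_image.2 hST)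
      (forall_mem_image.2 hSA)
  have isCompact_S : IsCompact S :=
    hScl.closure_eq ▸ isCompact_closure_of_isTightMeasureSet isTight_S
  simpa only [isMinOn_iff] using hP.exists_isMinOn hSne isCompact_S

end ConstrainedMeasures

theorem pi_norm_le_pi_norm {ι : Type*} [Fintype ι] {G H : ι → Type*}
    [∀ i, SeminormedAddGroup (G i)] [∀ i, SeminormedAddGroup (H i)] {x : ∀ i, G i} {y : ∀ i, H i}
    (h : ∀ i, ‖x i‖ ≤ ‖y i‖) : ‖x‖ ≤ ‖y‖ :=
  (pi_norm_le_iff_of_nonneg (norm_nonneg y)).2 fun i ↦ (h i).trans (norm_le_pi_norm y i)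

section TreatySet

variable {n : ℕ}

theorem isClosed_treatySet : IsClosed (treatySet n) := by
  have eq_inter : treatySet n = {p | 0 ≤ p.2} ∩ {p | p.2 ≤ p.1} := ext fun _ ↦ forall_and
  rw [eq_inter]
  exact (isClosed_le continuous_const continuous_snd).inter
    (isClosed_le continuous_snd continuous_fst)

theorem norm_le_norm_fst_of_mem_treatySet {p : Pt n} (hp : p ∈ treatySet n) : ‖p‖ ≤ ‖p.1‖ := by
  have norm_snd_apply_le (i : Fin n) : ‖p.2 i‖ ≤ ‖p.1 i‖ :=
    norm_le_norm_of_abs_le_abs (abs_le_abs_of_nonneg (hp i).1 (hp i).2)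
  exact norm_prod_le_iff.2 ⟨le_rfl, pi_norm_le_pi_norm norm_snd_apply_le⟩

theorem tendsto_fst_cocompact_inf_principal_treatySet :
    Tendsto Prod.fst (cocompact (Pt n) ⊓ 𝓟 (treatySet n)) (cocompact (Vec n)) :=
  tendsto_cocompact_inf_principal_of_norm_le fun _ ↦ norm_le_norm_fst_of_mem_treatySet

theorem ae_mem_treatySet_iff {η : Measure (Pt n)} [IsProbabilityMeasure η] :
    (∀ᵐ p ∂η, p ∈ treatySet n) ↔ η (treatySet n) = 1 :=
  mem_ae_iff_prob_eq_one isClosed_treatySet.measurableSet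

end TreatySet

/-- if `𝒫` is lower semi-continuous on the set `𝓜` of reinsurance
treaties (with the weak topology) and `𝒮 ⊆ 𝓜` is closed and nonempty, then an
optimal reinsurance treaty exists, i.e. `𝒫` attains its minimum over `𝒮`. -/
theorem stmt1 (n : ℕ) (μ : Measure (Vec n)) [IsProbabilityMeasure μ]
    (hμ : μ {x | ∀ i, 0 ≤ x i} = 1)
    (M : Set (ProbabilityMeasure (Pt n)))
    (hM : M = {η : ProbabilityMeasure (Pt n) |
      η.toMeasure.map Prod.fst = μ ∧ η.toMeasure (treatySet n) = 1})
    (P : ProbabilityMeasure (Pt n) → ℝ) (hP : LowerSemicontinuousOn P M)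
    (S : Set (ProbabilityMeasure (Pt n))) (hSM : S ⊆ M) (hScl : IsClosed S)
    (hSne : S.Nonempty) :
    ∃ ηs ∈ S, ∀ η ∈ S, P ηs ≤ P η := by
  subst hM
  exact stmt1_general measurable_fst tendsto_fst_cocompact_inf_principal_treatySet
    (isTightMeasureSet_singleton (μ := μ)) (fun _ hη ↦ (hSM hη).1)
    (fun _ hη ↦ ae_mem_treatySet_iff.2 (hSM hη).2) hScl hSne (hP.mono hSM)
end
end

section
/- In the setting of the Lagrange multiplier proposition for reinsurance (𝒮 = {η ∈ 𝓜 : 𝒢(η) ≤ 0}, η* optimal, 𝒞 ⊆ 𝒟 convex containing η* with convex-linear directional derivatives of 𝒫 and 𝒢 at η*), if in addition either 𝒢 is constant on 𝒞, or there exists η ∈ 𝒞 with 𝒢(η*) + d𝒢(η*; η − η*) < 0 (componentwise), then the multiplier r* in the conclusion r*·d𝒫(η*; η − η*) + λ* · d𝒢(η*; η − η*) ≥ 0 for all η ∈ 𝒞 can be chosen strictly positive (equivalently, equal to 1). -/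
open MeasureTheory Filter Topology Set

noncomputable section

def IsTreaty (n : ℕ) (μ : Measure (Vec n)) (η : Measure (Pt n)) : Prop :=
  IsProbabilityMeasure η ∧ η.map Prod.fst = μ ∧ η (treatySet n) = 1

def combo {α : Type*} [MeasurableSpace α] (η ϑ : Measure α) (t : ℝ) : Measure α :=
  ENNReal.ofReal (1 - t) • η + ENNReal.ofReal t • ϑ

def HasDirDeriv {α : Type*} [MeasurableSpace α] (P : Measure α → ℝ)
    (η ϑ : Measure α) (L : ℝ) : Prop :=
  Tendsto (fun t : ℝ => (P (combo η ϑ t) - P η) / t) (𝓝[>] 0) (𝓝 L)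

/-!
If every linearized constraint `𝒢(η*) + d𝒢(η*; η − η*)` is negative, then `η*` can be moved a little
towards `η` without violating the constraints, so optimality forces `d𝒫(η*; η − η*) ≥ 0`. Hence the
linearized objective and the linearized constraints are never all negative at once on `𝒞`.
The upward closure of their set of values is convex, and separating it from the open negative
orthant gives nonnegative weights, not all zero, under which the weighted sum is nonnegative on `𝒞`.
If the weight of the objective vanished, the remaining sum would be negative at the Slater point, so
that weight can be normalized to `1`. At `η = η*` all the derivatives vanish, which yields
`λ* · 𝒢(η*) = 0`. When all of `𝒞` is feasible, `λ* = 0` works.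
-/

/-- A family `F` is convexlike on `C` when every convex combination of two of its value vectors is
dominated, coordinate by coordinate, by the value vector at a point of `C`. It expresses the
convexity of functionals on measures, which do not form a real vector space. -/
def ConvexlikeOn {β ι : Type*} (C : Set β) (F : β → ι → ℝ) : Prop :=
  ∀ a ∈ C, ∀ b ∈ C, ∀ t ∈ Icc (0 : ℝ) 1, ∃ c ∈ C, ∀ k, F c k ≤ (1 - t) * F a k + t * F b k

section Alternative

variable {β ι : Type*} {C : Set β} {F : β → ι → ℝ}

lemma ConvexlikeOn.convex_upperClosure_image (hF : ConvexlikeOn C F) :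
    Convex ℝ (upperClosure (F '' C) : Set (ι → ℝ)) := by
  rintro x ⟨_, ⟨a, ha, rfl⟩, hax⟩ y ⟨_, ⟨b, hb, rfl⟩, hby⟩ u v hu hv huv
  obtain rfl : u = 1 - v := eq_sub_of_add_eq huv
  obtain ⟨c, hc, hFc⟩ := hF a ha b hb v ⟨hv, sub_nonneg.mp hu⟩
  refine ⟨F c, mem_image_of_mem F hc, fun k ↦ (hFc k).trans ?_⟩
  exact add_le_add (mul_le_mul_of_nonneg_left (hax k) hu) (mul_le_mul_of_nonneg_left (hby k) hv)

variable [Fintype ι]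

lemma exists_nonneg_weights_of_convex {K : Set (ι → ℝ)} (hK : Convex ℝ K)
    (hne : K.Nonempty) (hnonneg : ∀ x ∈ K, ∃ k, 0 ≤ x k) :
    ∃ w : ι → ℝ, (∀ k, 0 ≤ w k) ∧ w ≠ 0 ∧ ∀ x ∈ K, 0 ≤ ∑ k, w k * x k := by
  classical
  let N : Set (ι → ℝ) := Set.pi univ fun _ ↦ Iio 0
  have hN_closure : ∀ y ≤ 0, y ∈ closure N := fun y hy ↦ by
    rw [closure_pi_set]
    exact fun k _ ↦ closure_Iio (0 : ℝ) ▸ hy k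
  have hNK : Disjoint N K := disjoint_left.mpr fun x hxN hxK ↦ by
    obtain ⟨k, hk⟩ := hnonneg x hxK
    exact hk.not_gt (hxN k (mem_univ k))
  obtain ⟨f, u, hfN, hfK⟩ := geometric_hahn_banach_open (convex_pi fun _ _ ↦ convex_Iio 0)
    (isOpen_set_pi finite_univ fun _ _ ↦ isOpen_Iio) hK hNK
  have hf_le : ∀ y ≤ 0, f y ≤ u := fun y hy ↦
    closure_minimal (fun z hz ↦ (hfN z hz).le) (isClosed_le f.continuous continuous_const)
      (hN_closure y hy)
  have hu : 0 ≤ u := by simpa using hf_le 0 le_rfl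
  -- The nonpositive orthant is a cone, so a functional bounded above on it is nonpositive there.
  have hf_nonpos : ∀ y ≤ 0, f y ≤ 0 := fun y hy ↦ by
    by_contra! hpos
    have hscaled := hf_le (((u + 1) / f y) • y) (smul_nonpos_of_nonneg_of_nonpos (by positivity) hy)
    rw [map_smul, smul_eq_mul, div_mul_cancel₀ _ hpos.ne'] at hscaled
    linarith
  have hf_eq_sum : ∀ x, f x = ∑ k, f (Pi.single k 1) * x k := fun x ↦ by
    conv_lhs => rw [pi_eq_sum_univ' x]
    simp [mul_comm]
  refine ⟨fun k ↦ f (Pi.single k 1), fun k ↦ ?_, fun hw ↦ ?_, fun x hx ↦ ?_⟩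
  · simpa using hf_nonpos (-Pi.single k 1) (by simp)
  · obtain ⟨x, hx⟩ := hne
    have hf_zero : ∀ y, f y = 0 := fun y ↦ by simp [hf_eq_sum y, congr_fun hw]
    have hu_pos : 0 < u := by simpa [hf_zero] using hfN (fun _ ↦ -1) (by simp)
    exact hu_pos.not_ge (by simpa only [hf_zero] using hfK x hx)
  · exact hf_eq_sum x ▸ hu.trans (hfK x hx)

lemma ConvexlikeOn.exists_nonneg_weights (hF : ConvexlikeOn C F) (hC : C.Nonempty)
    (hnonneg : ∀ a ∈ C, ∃ k, 0 ≤ F a k) :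
    ∃ w : ι → ℝ, (∀ k, 0 ≤ w k) ∧ w ≠ 0 ∧ ∀ a ∈ C, 0 ≤ ∑ k, w k * F a k := by
  obtain ⟨w, hw, hw_ne, hwF⟩ := exists_nonneg_weights_of_convex
    hF.convex_upperClosure_image ((hC.image F).mono subset_upperClosure) <| by
      rintro x ⟨_, ⟨a, ha, rfl⟩, hax⟩
      obtain ⟨k, hk⟩ := hnonneg a ha
      exact ⟨k, hk.trans (hax k)⟩
  exact ⟨w, hw, hw_ne, fun a ha ↦ hwF _ (subset_upperClosure (mem_image_of_mem F ha))⟩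

theorem ConvexlikeOn.exists_weights_eq_one (hF : ConvexlikeOn C F) (k₀ : ι)
    (hslater : ∃ a ∈ C, ∀ k ≠ k₀, F a k < 0) (hnonneg : ∀ a ∈ C, ∃ k, 0 ≤ F a k) :
    ∃ w : ι → ℝ, (∀ k, 0 ≤ w k) ∧ w k₀ = 1 ∧ ∀ a ∈ C, 0 ≤ ∑ k, w k * F a k := by
  obtain ⟨s, hs, hFs⟩ := hslater
  obtain ⟨w, hw, hw_ne, hwF⟩ := hF.exists_nonneg_weights ⟨s, hs⟩ hnonneg
  have hw₀ : w k₀ ≠ 0 := fun hw₀ ↦ hw_ne <| by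
    have hterm : ∀ k ∈ Finset.univ, w k * F s k ≤ 0 := fun k _ ↦ by
      rcases eq_or_ne k k₀ with rfl | hk
      · simp [hw₀]
      · exact mul_nonpos_of_nonneg_of_nonpos (hw k) (hFs k hk).le
    have hterm_zero := (Finset.sum_eq_zero_iff_of_nonpos hterm).mp
      ((Finset.sum_nonpos hterm).antisymm (hwF s hs))
    ext k
    rcases eq_or_ne k k₀ with rfl | hk
    · exact hw₀
    · exact (mul_eq_zero.mp (hterm_zero k (Finset.mem_univ k))).resolve_right (hFs k hk).ne
  refine ⟨fun k ↦ (w k₀)⁻¹ * w k, fun k ↦ mul_nonneg (inv_nonneg.mpr (hw k₀)) (hw k),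
    inv_mul_cancel₀ hw₀, fun a ha ↦ ?_⟩
  simp only [mul_assoc, ← Finset.mul_sum]
  exact mul_nonneg (inv_nonneg.mpr (hw k₀)) (hwF a ha)

theorem ConvexlikeOn.exists_lagrange_multiplier {p : β → ℝ} {g : β → ι → ℝ}
    (hpg : ConvexlikeOn C fun a (k : Option ι) ↦ k.elim (p a) (g a))
    (hslater : ∃ a ∈ C, ∀ i, g a i < 0) (hp : ∀ a ∈ C, (∀ i, g a i < 0) → 0 ≤ p a) :
    ∃ l : ι → ℝ, (∀ i, 0 ≤ l i) ∧ ∀ a ∈ C, 0 ≤ p a + ∑ i, l i * g a i := by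
  obtain ⟨s, hs, hgs⟩ := hslater
  obtain ⟨w, hw, hw_none, hwF⟩ := hpg.exists_weights_eq_one none
    ⟨s, hs, by rintro (_ | i) hi; exacts [absurd rfl hi, hgs i]⟩ fun a ha ↦ by
      by_contra! hneg
      exact (hneg none).not_ge (hp a ha fun i ↦ hneg (some i))
  refine ⟨fun i ↦ w (some i), fun i ↦ hw (some i), fun a ha ↦ ?_⟩
  simpa [Fintype.sum_option, hw_none] using hwF a ha

end Alternative

section DirDeriv

variable {α : Type*} [MeasurableSpace α] {P : Measure α → ℝ} {η ϑ : Measure α} {L : ℝ}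

lemma combo_self (η : Measure α) {t : ℝ} (ht : t ∈ Icc (0 : ℝ) 1) : combo η η t = η := by
  rw [combo, ← add_smul, ← ENNReal.ofReal_add (sub_nonneg.mpr ht.2) ht.1, sub_add_cancel,
    ENNReal.ofReal_one, one_smul]

lemma HasDirDeriv.eq_zero_of_self (h : HasDirDeriv P η η L) : L = 0 := by
  refine tendsto_nhds_unique h (tendsto_const_nhds.congr' ?_)
  filter_upwards [Ioc_mem_nhdsGT zero_lt_one] with t ht
  rw [combo_self η (Ioc_subset_Icc_self ht), sub_self, zero_div]

lemma HasDirDeriv.nonneg_of_isMinOn {S : Set (Measure α)} (h : HasDirDeriv P η ϑ L)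
    (hmin : IsMinOn P S η) (hS : ∀ᶠ t in 𝓝[>] (0 : ℝ), combo η ϑ t ∈ S) : 0 ≤ L := by
  refine ge_of_tendsto h ?_
  filter_upwards [self_mem_nhdsWithin, hS] with t ht htS
  exact div_nonneg (sub_nonneg.mpr (hmin htS)) (le_of_lt ht)

lemma HasDirDeriv.eventually_combo_neg (h : HasDirDeriv P η ϑ L) (hη : P η ≤ 0)
    (hL : P η + L < 0) : ∀ᶠ t in 𝓝[>] (0 : ℝ), P (combo η ϑ t) < 0 := by
  filter_upwards [h.eventually_lt_const (show L < -P η by linarith),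
    Ioc_mem_nhdsGT zero_lt_one] with t hquot ht
  calc P (combo η ϑ t) < -P η * t + P η := sub_lt_iff_lt_add.mp ((div_lt_iff₀ ht.1).mp hquot)
    _ = (1 - t) * P η := by ring
    _ ≤ 0 := mul_nonpos_of_nonneg_of_nonpos (sub_nonneg.mpr ht.2) hη

end DirDeriv

theorem stmt3_general {α ι : Type*} [MeasurableSpace α] [Fintype ι]
    {P dP : Measure α → ℝ} {G dG : Measure α → ι → ℝ} {C : Set (Measure α)} {ηs : Measure α}
    (hηsC : ηs ∈ C) (hGs : ∀ i, G ηs i ≤ 0)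
    (hopt : IsMinOn P {η ∈ C | ∀ i, G η i ≤ 0} ηs)
    (hCconv : ∀ η₁ ∈ C, ∀ η₂ ∈ C, ∀ t ∈ Icc (0 : ℝ) 1, combo η₁ η₂ t ∈ C)
    (hdP : ∀ η ∈ C, HasDirDeriv P ηs η (dP η))
    (hdG : ∀ η ∈ C, ∀ i, HasDirDeriv (fun ξ ↦ G ξ i) ηs η (dG η i))
    (hPconv : ∀ η₁ ∈ C, ∀ η₂ ∈ C, ∀ t ∈ Icc (0 : ℝ) 1,
      dP (combo η₁ η₂ t) ≤ (1 - t) * dP η₁ + t * dP η₂)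
    (hGconv : ∀ η₁ ∈ C, ∀ η₂ ∈ C, ∀ t ∈ Icc (0 : ℝ) 1, ∀ i,
      dG (combo η₁ η₂ t) i ≤ (1 - t) * dG η₁ i + t * dG η₂ i)
    (hreg : (∀ η ∈ C, ∀ i, G η i ≤ 0) ∨ ∃ η ∈ C, ∀ i, G ηs i + dG η i < 0) :
    ∃ l : ι → ℝ, (∀ i, 0 ≤ l i) ∧ ∑ i, l i * G ηs i = 0 ∧
      ∀ η ∈ C, 0 ≤ dP η + ∑ i, l i * dG η i := by
  have hdP_nonneg : ∀ η ∈ C, (∀ᶠ t in 𝓝[>] (0 : ℝ), ∀ i, G (combo ηs η t) i ≤ 0) → 0 ≤ dP η := by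
    refine fun η hη hfeas ↦ (hdP η hη).nonneg_of_isMinOn hopt ?_
    filter_upwards [hfeas, Ioc_mem_nhdsGT zero_lt_one] with t hGt ht
    exact ⟨hCconv ηs hηsC η hη t (Ioc_subset_Icc_self ht), hGt⟩
  rcases hreg with hfeas | ⟨s, hs, hGs_lin⟩
  · refine ⟨0, fun _ ↦ le_rfl, by simp, fun η hη ↦ ?_⟩
    have hdPη : 0 ≤ dP η := hdP_nonneg η hη <| by
      filter_upwards [Ioc_mem_nhdsGT zero_lt_one] with t ht
      exact hfeas _ (hCconv ηs hηsC η hη t (Ioc_subset_Icc_self ht))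
    simpa using hdPη
  · have hconvexlike : ConvexlikeOn C fun η (k : Option ι) ↦
        k.elim (dP η) (fun i ↦ G ηs i + dG η i) := fun η₁ h₁ η₂ h₂ t ht ↦ by
      refine ⟨combo η₁ η₂ t, hCconv η₁ h₁ η₂ h₂ t ht, ?_⟩
      rintro (_ | i)
      · exact hPconv η₁ h₁ η₂ h₂ t ht
      · simp only [Option.elim_some]
        linarith [hGconv η₁ h₁ η₂ h₂ t ht i]
    obtain ⟨l, hl, hlagrange⟩ := hconvexlike.exists_lagrange_multiplier ⟨s, hs, hGs_lin⟩
      fun η hη hneg ↦ hdP_nonneg η hη <| eventually_all.mpr fun i ↦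
        ((hdG η hη i).eventually_combo_neg (hGs i) (hneg i)).mono fun _ ↦ le_of_lt
    simp only [mul_add, Finset.sum_add_distrib] at hlagrange
    have hslack : ∑ i, l i * G ηs i = 0 := by
      refine (Finset.sum_nonpos fun i _ ↦
        mul_nonpos_of_nonneg_of_nonpos (hl i) (hGs i)).antisymm ?_
      have hdPs : dP ηs = 0 := (hdP ηs hηsC).eq_zero_of_self
      have hdGs : ∀ i, dG ηs i = 0 := fun i ↦ (hdG ηs hηsC i).eq_zero_of_self
      simpa [hdPs, hdGs] using hlagrange ηs hηsC
    exact ⟨l, hl, hslack, by simpa only [hslack, zero_add] using hlagrange⟩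

/-- in the Lagrange-multiplier setting for reinsurance, if in
addition either `𝒢` is constant on `𝒞`, or there is `η ∈ 𝒞` with
`𝒢(η*) + d𝒢(η*; η − η*) < 0` componentwise, then the multiplier `r*` can be
chosen strictly positive, equivalently equal to `1`:  there is `λ* ∈ ℝ₊ᵐ` with
`λ*·𝒢(η*) = 0` and `d𝒫(η*; η−η*) + λ*·d𝒢(η*; η−η*) ≥ 0` for all `η ∈ 𝒞`. -/
theorem stmt3 (n m : ℕ) (μ : Measure (Vec n)) [IsProbabilityMeasure μ]
    (P : Measure (Pt n) → ℝ) (G : Measure (Pt n) → Fin m → ℝ)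
    (ηs : Measure (Pt n)) (hηs : IsTreaty n μ ηs) (hGs : ∀ i, G ηs i ≤ 0)
    (hopt : ∀ η, IsTreaty n μ η → (∀ i, G η i ≤ 0) → P ηs ≤ P η)
    (C : Set (Measure (Pt n))) (hCsub : ∀ η ∈ C, IsTreaty n μ η)
    (hηsC : ηs ∈ C)
    (hCconv : ∀ η₁ ∈ C, ∀ η₂ ∈ C, ∀ t ∈ Icc (0:ℝ) 1, combo η₁ η₂ t ∈ C)
    (dP : Measure (Pt n) → ℝ) (dG : Measure (Pt n) → Fin m → ℝ)
    (hdP : ∀ η ∈ C, HasDirDeriv P ηs η (dP η))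
    (hdG : ∀ η ∈ C, ∀ i, HasDirDeriv (fun ξ => G ξ i) ηs η (dG η i))
    (hPlin : ∀ η₁ ∈ C, ∀ η₂ ∈ C, ∀ t ∈ Icc (0:ℝ) 1,
      dP (combo η₁ η₂ t) = (1 - t) * dP η₁ + t * dP η₂)
    (hGlin : ∀ η₁ ∈ C, ∀ η₂ ∈ C, ∀ t ∈ Icc (0:ℝ) 1, ∀ i,
      dG (combo η₁ η₂ t) i = (1 - t) * dG η₁ i + t * dG η₂ i)
    (hreg : (∀ η₁ ∈ C, ∀ η₂ ∈ C, G η₁ = G η₂) ∨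
      (∃ η ∈ C, ∀ i, G ηs i + dG η i < 0)) :
    ∃ l : Fin m → ℝ, (∀ i, 0 ≤ l i) ∧ (∑ i, l i * G ηs i) = 0 ∧
      ∀ η ∈ C, 0 ≤ dP η + ∑ i, l i * dG η i := by
  refine stmt3_general hηsC hGs (fun η hη ↦ hopt η (hCsub η hη.1) hη.2) hCconv hdP hdG
    (fun η₁ h₁ η₂ h₂ t ht ↦ (hPlin η₁ h₁ η₂ h₂ t ht).le)
    (fun η₁ h₁ η₂ h₂ t ht i ↦ (hGlin η₁ h₁ η₂ h₂ t ht i).le)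
    (hreg.imp_left fun hG_const η hη ↦ by rwa [hG_const η hη ηs hηsC])
end
end

section
/- Let p : ℝ₊ⁿ × ℝ₊ⁿ → ℝ be continuous and integrable with respect to every η ∈ 𝓜, let 𝒫(η) = ∫ p(x,y) η(dx,dy), and define M = {(x,y) ∈ 𝒜 : y ∈ argmin_{t ∈ [0,x]} p(x,t)}. Then, assuming the partial minimization function x ↦ inf_{t∈[0,x]} p(x,t) is measurable, a treaty η ∈ 𝓜 minimizes 𝒫 over 𝓜 if and only if η(M) = 1. -/
/-!
Every treaty has first marginal `μ` and lives on `y ∈ [0, x]`, so its cost is at least `∫ m dμ`,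
where `m x = inf_{t ∈ [0, x]} p (x, t)`, with equality exactly when `p (x, y) = m x` almost surely,
i.e. when the treaty is concentrated on the argmin set. The bound is the infimum: rescaling `[0, x]`
to the fixed box `[0, 1]`, a countable dense set of proportions yields, for every `ε > 0`, a
measurable `f` with `p (x, f x) < m x + ε`, and the law of `(x, f x)` is a treaty of cost at most
`∫ m dμ + ε`. The same rescaling makes `m` continuous on the orthant, hence measurable.
-/

open MeasureTheory Filter Topology Set

noncomputable section

section MeasurableSelection

variable {X K α : Type*} [MeasurableSpace X] [TopologicalSpace K]
  [TopologicalSpace.SeparableSpace K] [Nonempty K] [MeasurableSpace K]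
  [LinearOrder α] [TopologicalSpace α] [OrderClosedTopology α] [SecondCountableTopology α]
  [MeasurableSpace α] [OpensMeasurableSpace α]

lemma exists_measurable_forall_lt {g : X → K → α} {c : X → α}
    (hg_meas : ∀ k, Measurable fun x => g x k) (hg_usc : ∀ x, UpperSemicontinuous (g x))
    (hc : Measurable c) (hlt : ∀ x, ∃ k, g x k < c x) :
    ∃ f : X → K, Measurable f ∧ ∀ x, g x (f x) < c x := by
  classical
  let u := TopologicalSpace.denseSeq K
  have exists_index (x : X) : ∃ i, g x (u i) < c x :=
    (TopologicalSpace.denseRange_denseSeq K).exists_mem_open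
      ((hg_usc x).isOpen_preimage (c x)) (hlt x)
  exact ⟨fun x => u (Nat.find (exists_index x)),
    Measurable.find (fun _ => measurable_const)
      (fun i => measurableSet_lt (hg_meas (u i)) hc) exists_index,
    fun x => Nat.find_spec (exists_index x)⟩

end MeasurableSelection

section MarginalBound

variable {Ω X : Type*} [MeasurableSpace Ω] [MeasurableSpace X] {η : Measure Ω} {μ : Measure X}
  {π : Ω → X}

lemma integral_comp_of_measurePreserving {E : Type*} [NormedAddCommGroup E] [NormedSpace ℝ E]
    {m : X → E} (hπ : MeasurePreserving π η μ) (hm : AEStronglyMeasurable m μ) :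
    ∫ z, m (π z) ∂η = ∫ x, m x ∂μ := by
  rw [← hπ.map_eq] at hm ⊢
  exact (integral_map hπ.measurable.aemeasurable hm).symm

variable {m : X → ℝ} {p : Ω → ℝ}

lemma integral_le_integral_of_comp_ae_le (hπ : MeasurePreserving π η μ) (hm : Integrable m μ)
    (hp : Integrable p η) (hle : m ∘ π ≤ᵐ[η] p) : ∫ x, m x ∂μ ≤ ∫ z, p z ∂η := by
  rw [← integral_comp_of_measurePreserving hπ hm.aestronglyMeasurable]
  exact integral_mono_ae (hπ.integrable_comp_of_integrable hm) hp hle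

lemma integral_eq_integral_iff_of_comp_ae_le (hπ : MeasurePreserving π η μ)
    (hm : Integrable m μ) (hp : Integrable p η) (hle : m ∘ π ≤ᵐ[η] p) :
    ∫ x, m x ∂μ = ∫ z, p z ∂η ↔ m ∘ π =ᵐ[η] p := by
  rw [← integral_comp_of_measurePreserving hπ hm.aestronglyMeasurable]
  exact integral_eq_iff_of_ae_le (hπ.integrable_comp_of_integrable hm) hp hle

end MarginalBound

section BoxInf

variable {ι : Type*} {p : (ι → ℝ) × (ι → ℝ) → ℝ} {x y : ι → ℝ}

/-- The partial minimization function `x ↦ inf_{t ∈ [0, x]} p (x, t)`. If `x` has a negative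
coordinate then `[0, x]` is empty and the value is `0`. -/
def boxInf (p : (ι → ℝ) × (ι → ℝ) → ℝ) (x : ι → ℝ) : ℝ :=
  sInf ((fun t => p (x, t)) '' Icc 0 x)

lemma isLeast_boxInf (hx : 0 ≤ x) (hp : ContinuousOn (fun t => p (x, t)) (Icc 0 x)) :
    IsLeast ((fun t => p (x, t)) '' Icc 0 x) (boxInf p x) :=
  (isCompact_Icc.image_of_continuousOn hp).isLeast_sInf ((nonempty_Icc.2 hx).image _)

lemma boxInf_le (hp : ContinuousOn (fun t => p (x, t)) (Icc 0 x)) (hy : y ∈ Icc 0 x) :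
    boxInf p x ≤ p (x, y) :=
  (isLeast_boxInf (hy.1.trans hy.2) hp).2 (mem_image_of_mem _ hy)

lemma boxInf_eq_iff_forall_le (hp : ContinuousOn (fun t => p (x, t)) (Icc 0 x))
    (hy : y ∈ Icc 0 x) : boxInf p x = p (x, y) ↔ ∀ t ∈ Icc 0 x, p (x, y) ≤ p (x, t) := by
  constructor
  · intro h t ht
    exact h ▸ boxInf_le hp ht
  · intro h
    obtain ⟨t, ht, hpt⟩ := (isLeast_boxInf (hy.1.trans hy.2) hp).1
    exact (boxInf_le hp hy).antisymm (hpt ▸ h t ht)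

lemma image_mul_right_Icc_zero_one (hx : 0 ≤ x) : (· * x) '' Icc (0 : ι → ℝ) 1 = Icc 0 x := by
  rw [← pi_univ_Icc, ← pi_univ_Icc]
  refine (piMap_image_univ_pi (fun i (t : ℝ) => t * x i) _).trans (pi_congr rfl fun i _ => ?_)
  simpa using image_mul_right_Icc (zero_le_one' ℝ) (hx i)

lemma boxInf_eq_sInf_image_Icc_zero_one (hx : 0 ≤ x) :
    boxInf p x = sInf ((fun u => p (x, u * x)) '' Icc 0 1) := by
  rw [boxInf, ← image_mul_right_Icc_zero_one hx, image_image]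

variable [Countable ι]

lemma measurable_boxInf (hp : Continuous p) : Measurable (boxInf p) := by
  classical
  have continuous_rescaled : Continuous fun x => sInf ((fun u => p (x, u * x)) '' Icc 0 1) :=
    isCompact_Icc.continuous_sInf (by fun_prop)
  have boxInf_eq_ite : boxInf p = fun x =>
      if 0 ≤ x then sInf ((fun u => p (x, u * x)) '' Icc 0 1) else 0 := by
    ext x
    split_ifs with hx
    · exact boxInf_eq_sInf_image_Icc_zero_one hx
    · rw [boxInf, Icc_eq_empty hx, image_empty, Real.sInf_empty]
  rw [boxInf_eq_ite]
  exact continuous_rescaled.measurable.ite measurableSet_Ici measurable_const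

lemma exists_measurable_forall_lt_boxInf_add (hp : Continuous p) {ε : ℝ} (hε : 0 < ε) :
    ∃ f : (ι → ℝ) → ι → ℝ, Measurable f ∧
      ∀ x, 0 ≤ x → f x ∈ Icc 0 x ∧ p (x, f x) < boxInf p x + ε := by
  have : Nonempty (Icc (0 : ι → ℝ) 1) := ⟨⟨0, left_mem_Icc.2 zero_le_one⟩⟩
  -- Truncating `x` to the orthant makes the selection problem solvable at every `x`.
  have continuous_trunc : Continuous fun x : ι → ℝ => x ⊔ 0 :=
    continuous_pi fun i => (continuous_apply i).sup continuous_const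
  have exists_proportion (x : ι → ℝ) : ∃ u : Icc (0 : ι → ℝ) 1,
      p (x ⊔ 0, u * (x ⊔ 0)) < boxInf p (x ⊔ 0) + ε := by
    obtain ⟨t, ht, hpt⟩ := (isLeast_boxInf (p := p) (x := x ⊔ 0) le_sup_right (by fun_prop)).1
    rw [← image_mul_right_Icc_zero_one le_sup_right] at ht
    obtain ⟨u, hu, rfl⟩ := ht
    exact ⟨⟨u, hu⟩, hpt.trans_lt (lt_add_of_pos_right _ hε)⟩
  obtain ⟨u, hu_meas, hu_lt⟩ := exists_measurable_forall_lt
    (g := fun x (u : Icc (0 : ι → ℝ) 1) => p (x ⊔ 0, u * (x ⊔ 0)))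
    (fun _ => Continuous.measurable (by fun_prop))
    (fun _ => Continuous.upperSemicontinuous (by fun_prop))
    (((measurable_boxInf hp).comp continuous_trunc.measurable).add_const ε) exists_proportion
  refine ⟨fun x => u x * x, (measurable_subtype_coe.comp hu_meas).mul measurable_id,
    fun x hx => ⟨?_, ?_⟩⟩
  · exact image_mul_right_Icc_zero_one hx ▸ mem_image_of_mem (· * x) (u x).2
  · simpa only [Function.comp_apply, sup_of_le_left hx] using hu_lt x

end BoxInf

section Treaty

variable {n : ℕ} {μ : Measure (Vec n)} {η : Measure (Pt n)} {p : Pt n → ℝ}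

lemma mem_treatySet {q : Pt n} : q ∈ treatySet n ↔ q.2 ∈ Icc 0 q.1 :=
  forall_and

lemma measurableSet_treatySet : MeasurableSet (treatySet n) := by
  have treatySet_eq : treatySet n = {q | 0 ≤ q.2} ∩ {q | q.2 ≤ q.1} := by
    ext q
    exact mem_treatySet
  rw [treatySet_eq]
  exact ((isClosed_le continuous_const continuous_snd).inter
    (isClosed_le continuous_snd continuous_fst)).measurableSet

/-- The set `M` of the pairs `(x, y) ∈ 𝒜` such that `y` minimizes `p (x, ·)` over `[0, x]`. -/
def argminSet (p : Pt n → ℝ) : Set (Pt n) :=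
  {q | q ∈ treatySet n ∧ ∀ s ∈ Icc (0 : Vec n) q.1, p q ≤ p (q.1, s)}

lemma argminSet_eq_inter (hp : Continuous p) :
    argminSet p = treatySet n ∩ {q | boxInf p q.1 = p q} := by
  ext q
  exact and_congr_right fun hq =>
    (boxInf_eq_iff_forall_le (by fun_prop) (mem_treatySet.1 hq)).symm

lemma measurableSet_argminSet (hp : Continuous p) : MeasurableSet (argminSet p) := by
  rw [argminSet_eq_inter hp]
  exact measurableSet_treatySet.inter
    (measurableSet_eq_fun ((measurable_boxInf hp).comp measurable_fst) hp.measurable)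

lemma isTreaty_map_prodMk [IsProbabilityMeasure μ] (hμ : ∀ᵐ x ∂μ, 0 ≤ x) {f : Vec n → Vec n}
    (hf : Measurable f) (hf_mem : ∀ x, 0 ≤ x → f x ∈ Icc 0 x) :
    IsTreaty n μ (μ.map fun x => (x, f x)) := by
  have hgraph : Measurable fun x => (x, f x) := measurable_id.prodMk hf
  have := Measure.isProbabilityMeasure_map hgraph.aemeasurable (μ := μ)
  refine ⟨this, (Measure.fst_map_prodMk hf).trans Measure.map_id, ?_⟩
  rw [← mem_ae_iff_prob_eq_one measurableSet_treatySet]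
  refine (ae_map_iff hgraph.aemeasurable measurableSet_treatySet).2 ?_
  filter_upwards [hμ] with x hx using (mem_treatySet (q := (x, f x))).2 (hf_mem x hx)

namespace IsTreaty

lemma measurePreserving_fst (hη : IsTreaty n μ η) : MeasurePreserving Prod.fst η μ :=
  ⟨measurable_fst, hη.2.1⟩

lemma isProbabilityMeasure_marginal (hη : IsTreaty n μ η) : IsProbabilityMeasure μ :=
  have := hη.1
  hη.2.1 ▸ Measure.isProbabilityMeasure_map measurable_fst.aemeasurable

lemma ae_mem_treatySet (hη : IsTreaty n μ η) : ∀ᵐ q ∂η, q ∈ treatySet n :=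
  have := hη.1
  (mem_ae_iff_prob_eq_one measurableSet_treatySet).2 hη.2.2

lemma ae_marginal_nonneg (hη : IsTreaty n μ η) : ∀ᵐ x ∂μ, 0 ≤ x := by
  rw [← hη.2.1, ae_map_iff measurable_fst.aemeasurable measurableSet_Ici]
  filter_upwards [hη.ae_mem_treatySet] with q hq
  exact (mem_treatySet.1 hq).1.trans (mem_treatySet.1 hq).2

lemma boxInf_comp_fst_ae_le (hη : IsTreaty n μ η) (hp : Continuous p) :
    boxInf p ∘ Prod.fst ≤ᵐ[η] p := by
  filter_upwards [hη.ae_mem_treatySet] with q hq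
  exact boxInf_le (by fun_prop) (mem_treatySet.1 hq)

lemma measure_argminSet_eq_one_iff (hη : IsTreaty n μ η) (hp : Continuous p) :
    η (argminSet p) = 1 ↔ boxInf p ∘ Prod.fst =ᵐ[η] p := by
  have := hη.1
  rw [← mem_ae_iff_prob_eq_one (measurableSet_argminSet hp), argminSet_eq_inter hp, inter_mem_iff]
  exact and_iff_right hη.ae_mem_treatySet

end IsTreaty

section NearOptimal

variable [IsProbabilityMeasure μ]

lemma integrable_boxInf (hμ : ∀ᵐ x ∂μ, 0 ≤ x) (hp : Continuous p)
    (hpint : ∀ ϑ, IsTreaty n μ ϑ → Integrable p ϑ) : Integrable (boxInf p) μ := by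
  obtain ⟨f, hf, hf_spec⟩ := exists_measurable_forall_lt_boxInf_add hp one_pos
  have integrable_selection : Integrable (fun x => p (x, f x)) μ :=
    (hpint _ (isTreaty_map_prodMk hμ hf fun x hx => (hf_spec x hx).1)).comp_measurable
      (measurable_id.prodMk hf)
  refine integrable_of_le_of_le (measurable_boxInf hp).aestronglyMeasurable ?_ ?_
    (integrable_selection.sub (integrable_const 1)) integrable_selection
  · filter_upwards [hμ] with x hx using (sub_lt_iff_lt_add.2 (hf_spec x hx).2).le
  · filter_upwards [hμ] with x hx using boxInf_le (by fun_prop) (hf_spec x hx).1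

lemma exists_isTreaty_integral_le_add (hμ : ∀ᵐ x ∂μ, 0 ≤ x) (hp : Continuous p)
    (hpint : ∀ ϑ, IsTreaty n μ ϑ → Integrable p ϑ) {ε : ℝ} (hε : 0 < ε) :
    ∃ ϑ, IsTreaty n μ ϑ ∧ ∫ z, p z ∂ϑ ≤ ∫ x, boxInf p x ∂μ + ε := by
  obtain ⟨f, hf, hf_spec⟩ := exists_measurable_forall_lt_boxInf_add hp hε
  have hgraph : Measurable fun x => (x, f x) := measurable_id.prodMk hf
  have htreaty := isTreaty_map_prodMk hμ hf fun x hx => (hf_spec x hx).1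
  have hm_int := integrable_boxInf hμ hp hpint
  refine ⟨_, htreaty, ?_⟩
  calc ∫ z, p z ∂(μ.map fun x => (x, f x)) = ∫ x, p (x, f x) ∂μ :=
        integral_map hgraph.aemeasurable hp.aestronglyMeasurable
    _ ≤ ∫ x, (boxInf p x + ε) ∂μ := by
        refine integral_mono_ae ((hpint _ htreaty).comp_measurable hgraph)
          (hm_int.add (integrable_const ε)) ?_
        filter_upwards [hμ] with x hx using (hf_spec x hx).2.le
    _ = ∫ x, boxInf p x ∂μ + ε := by
        rw [integral_add hm_int (integrable_const ε), integral_const, probReal_univ, one_smul]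

end NearOptimal

lemma IsTreaty.forall_integral_le_iff_integral_boxInf_eq (hη : IsTreaty n μ η)
    (hp : Continuous p) (hpint : ∀ ϑ, IsTreaty n μ ϑ → Integrable p ϑ) :
    (∀ ϑ, IsTreaty n μ ϑ → ∫ z, p z ∂η ≤ ∫ z, p z ∂ϑ) ↔
      ∫ x, boxInf p x ∂μ = ∫ z, p z ∂η := by
  have := hη.isProbabilityMeasure_marginal
  have lower_bound (ϑ : Measure (Pt n)) (hϑ : IsTreaty n μ ϑ) :
      ∫ x, boxInf p x ∂μ ≤ ∫ z, p z ∂ϑ :=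
    integral_le_integral_of_comp_ae_le hϑ.measurePreserving_fst
      (integrable_boxInf hη.ae_marginal_nonneg hp hpint) (hpint ϑ hϑ)
      (hϑ.boxInf_comp_fst_ae_le hp)
  constructor
  · intro hmin
    refine (lower_bound η hη).antisymm (le_of_forall_pos_le_add fun ε hε => ?_)
    obtain ⟨ϑ, hϑ, hϑ_le⟩ := exists_isTreaty_integral_le_add hη.ae_marginal_nonneg hp hpint hε
    exact (hmin ϑ hϑ).trans hϑ_le
  · intro heq ϑ hϑ
    exact heq ▸ lower_bound ϑ hϑ

end Treaty

theorem stmt7_general (n : ℕ) (μ : Measure (Vec n)) (p : Pt n → ℝ) (hpcont : Continuous p)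
    (hpint : ∀ η, IsTreaty n μ η → Integrable p η)
    (η : Measure (Pt n)) (hη : IsTreaty n μ η) :
    (∀ ϑ, IsTreaty n μ ϑ → ∫ z, p z ∂η ≤ ∫ z, p z ∂ϑ) ↔ η (argminSet p) = 1 := by
  have := hη.isProbabilityMeasure_marginal
  have hm_int := integrable_boxInf hη.ae_marginal_nonneg hpcont hpint
  rw [hη.forall_integral_le_iff_integral_boxInf_eq hpcont hpint,
    hη.measure_argminSet_eq_one_iff hpcont]
  exact integral_eq_integral_iff_of_comp_ae_le hη.measurePreserving_fst hm_int (hpint η hη)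
    (hη.boxInf_comp_fst_ae_le hpcont)

/-- for `𝒫(η) = ∫ p dη` (no constraints), a treaty `η ∈ 𝓜` is
optimal iff it is concentrated on
`M = {(x,y) ∈ 𝒜 : y ∈ argmin_{t ∈ [0,x]} p(x,t)}`, assuming the partial
minimization function `x ↦ inf_{t ∈ [0,x]} p(x,t)` is measurable. -/
theorem stmt7 (n : ℕ) (μ : Measure (Vec n)) [IsProbabilityMeasure μ]
    (hac : μ ≪ volume)
    (p : Pt n → ℝ) (hpcont : Continuous p)
    (hpint : ∀ η, IsTreaty n μ η → Integrable p η)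
    (hm : Measurable fun x : Vec n => sInf ((fun s => p (x, s)) '' Icc 0 x))
    (η : Measure (Pt n)) (hη : IsTreaty n μ η) :
    (∀ ϑ, IsTreaty n μ ϑ → ∫ z, p z ∂η ≤ ∫ z, p z ∂ϑ) ↔
      η {q : Pt n | q ∈ treatySet n ∧
        ∀ s ∈ Icc (0 : Vec n) q.1, p q ≤ p (q.1, s)} = 1 :=
  stmt7_general n μ p hpcont hpint η hη
end
end

section
/- Let μ be a probability measure on [0,∞) with finite second moment and variance V = Var(μ) > 0, and let 0 ≤ c ≤ V. Then for every reinsurance treaty η ∈ 𝓜 (for μ, with n = 1) whose reinsured amount has variance c, i.e. Var(π₂#η) = c, the retained variance satisfies Var(T_#η) ≥ (√V − √c)². Moreover equality holds for the quota-share treaty η = (Id, x ↦ a·x)_#μ with a = √(c/V); hence the quota-share contract R(x) = a·x minimizes the retained variance among all (possibly randomized) treaties with reinsured variance c. -/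
open MeasureTheory Filter Topology Set

noncomputable section

/-- The variance `∫ t² dξ − (∫ t dξ)²` of a distribution `ξ` on ℝ. -/
def mvar (ξ : Measure ℝ) : ℝ := (∫ t, t ^ 2 ∂ξ) - (∫ t, t ∂ξ) ^ 2

/-!
By the Cauchy-Schwarz inequality for the covariance, the standard deviation is a seminorm on
square-integrable random variables. The reverse triangle inequality for the loss `X` and the
reinsured amount `Y` therefore gives `|σ(X) - σ(Y)| ≤ σ(X - Y)`. Equality holds when `Y = a X` with
`a ≥ 0`, and `a = √(c / V)` is the choice that gives `Y` variance `c`.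
-/

section Covariance

open ProbabilityTheory

variable {Ω : Type*} [MeasurableSpace Ω] {P : Measure Ω} {X Y : Ω → ℝ}

theorem sq_covariance_le_variance_mul_variance [IsFiniteMeasure P]
    (hX : MemLp X 2 P) (hY : MemLp Y 2 P) :
    cov[X, Y; P] ^ 2 ≤ Var[X; P] * Var[Y; P] := by
  have variance_smul_sub_nonneg (t : ℝ) :
      0 ≤ Var[X; P] * (t * t) + (-2 * cov[X, Y; P]) * t + Var[Y; P] :=
    calc 0 ≤ Var[t • X - Y; P] := variance_nonneg _ _
      _ = Var[X; P] * (t * t) + (-2 * cov[X, Y; P]) * t + Var[Y; P] := by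
        rw [variance_sub (hX.const_smul t) hY, variance_smul, covariance_smul_left]
        ring
  have discrim_nonpos := discrim_le_zero variance_smul_sub_nonneg
  rw [discrim] at discrim_nonpos
  linarith

theorem covariance_le_sqrt_variance_mul_sqrt_variance [IsFiniteMeasure P]
    (hX : MemLp X 2 P) (hY : MemLp Y 2 P) :
    cov[X, Y; P] ≤ √Var[X; P] * √Var[Y; P] := by
  rw [← Real.sqrt_mul (variance_nonneg X P)]
  exact Real.le_sqrt_of_sq_le (sq_covariance_le_variance_mul_variance hX hY)

theorem sq_sqrt_variance_sub_sqrt_variance_le [IsFiniteMeasure P]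
    (hX : MemLp X 2 P) (hY : MemLp Y 2 P) :
    (√Var[X; P] - √Var[Y; P]) ^ 2 ≤ Var[X - Y; P] :=
  calc (√Var[X; P] - √Var[Y; P]) ^ 2
      = Var[X; P] - 2 * (√Var[X; P] * √Var[Y; P]) + Var[Y; P] := by
        rw [sub_sq, Real.sq_sqrt (variance_nonneg X P), Real.sq_sqrt (variance_nonneg Y P),
          mul_assoc]
    _ ≤ Var[X; P] - 2 * cov[X, Y; P] + Var[Y; P] := by
        gcongr
        exact covariance_le_sqrt_variance_mul_sqrt_variance hX hY
    _ = Var[X - Y; P] := (variance_sub hX hY).symm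

theorem mvar_map_eq_variance [IsProbabilityMeasure P] (hX : MemLp X 2 P) :
    mvar (P.map X) = Var[X; P] := by
  rw [mvar, variance_eq_sub hX, integral_map hX.aemeasurable (by fun_prop),
    integral_map hX.aemeasurable (by fun_prop)]
  rfl

end Covariance

theorem mvar_map_const_mul (μ : Measure ℝ) (a : ℝ) :
    mvar (μ.map (a * ·)) = a ^ 2 * mvar μ := by
  have integral_map_mul : ∫ t, t ∂μ.map (a * ·) = a * ∫ t, t ∂μ := by
    rw [integral_map (by fun_prop) (by fun_prop), integral_const_mul]
  have integral_sq_map_mul : ∫ t, t ^ 2 ∂μ.map (a * ·) = a ^ 2 * ∫ t, t ^ 2 ∂μ := by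
    rw [integral_map (by fun_prop) (by fun_prop)]
    simp only [mul_pow, integral_const_mul]
  rw [mvar, mvar, integral_map_mul, integral_sq_map_mul]
  ring

/-- The pairs `(x, y)` of a loss `x` and a reinsured amount `y` with `0 ≤ y ≤ x`. -/
def admissiblePairs : Set (ℝ × ℝ) := {q | 0 ≤ q.2 ∧ q.2 ≤ q.1}

theorem measurableSet_admissiblePairs : MeasurableSet admissiblePairs :=
  (measurableSet_le measurable_const measurable_snd).inter
    (measurableSet_le measurable_snd measurable_fst)

/-- The (possibly randomized) reinsurance treaties `η ∈ 𝓜` for the loss distribution `μ`, with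
`n = 1`. Losses and reinsured amounts are real-valued, their nonnegativity being part of
`admissiblePairs`. -/
structure IsTreaty_s14 (μ : Measure ℝ) (η : Measure (ℝ × ℝ)) : Prop where
  isProbabilityMeasure : IsProbabilityMeasure η
  map_fst : η.map Prod.fst = μ
  measure_admissiblePairs : η admissiblePairs = 1

namespace IsTreaty_s14

variable {μ : Measure ℝ} {η : Measure (ℝ × ℝ)}

theorem ae_mem_admissiblePairs (hη : IsTreaty_s14 μ η) : ∀ᵐ q ∂η, q ∈ admissiblePairs :=
  have := hη.isProbabilityMeasure
  (mem_ae_iff_prob_eq_one measurableSet_admissiblePairs).2 hη.measure_admissiblePairs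

theorem memLp_fst {p : ENNReal} (hη : IsTreaty_s14 μ η) (hμ : MemLp id p μ) :
    MemLp Prod.fst p η := by
  rw [← hη.map_fst] at hμ
  exact hμ.comp_of_map measurable_fst.aemeasurable

theorem memLp_snd {p : ENNReal} (hη : IsTreaty_s14 μ η) (hμ : MemLp id p μ) :
    MemLp Prod.snd p η := by
  refine (hη.memLp_fst hμ).mono (by fun_prop) ?_
  filter_upwards [hη.ae_mem_admissiblePairs] with q ⟨snd_nonneg, snd_le_fst⟩
  exact abs_le_abs_of_nonneg snd_nonneg snd_le_fst

theorem sq_sqrt_mvar_sub_sqrt_mvar_le (hη : IsTreaty_s14 μ η) (hμ : MemLp id 2 μ) :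
    (√(mvar μ) - √(mvar (η.map Prod.snd))) ^ 2 ≤ mvar (η.map fun q => q.1 - q.2) := by
  have := hη.isProbabilityMeasure
  have memLp_fst := hη.memLp_fst hμ
  have memLp_snd := hη.memLp_snd hμ
  have memLp_retained : MemLp (fun q : ℝ × ℝ => q.1 - q.2) 2 η := memLp_fst.sub memLp_snd
  rw [← hη.map_fst, mvar_map_eq_variance memLp_fst, mvar_map_eq_variance memLp_snd,
    mvar_map_eq_variance memLp_retained]
  exact sq_sqrt_variance_sub_sqrt_variance_le memLp_fst memLp_snd

end IsTreaty_s14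

/-- The quota-share treaty `(Id, x ↦ a * x)_#μ`, under which the reinsurer pays the fraction `a` of
every loss. -/
def quotaShare (μ : Measure ℝ) (a : ℝ) : Measure (ℝ × ℝ) := μ.map fun x => (x, a * x)

theorem isTreaty_quotaShare {μ : Measure ℝ} [IsProbabilityMeasure μ] (hμ : μ (Ici 0) = 1)
    {a : ℝ} (ha0 : 0 ≤ a) (ha1 : a ≤ 1) : IsTreaty_s14 μ (quotaShare μ a) := by
  have isProbabilityMeasure : IsProbabilityMeasure (quotaShare μ a) :=
    Measure.isProbabilityMeasure_map (by fun_prop)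
  refine ⟨isProbabilityMeasure, ?_, ?_⟩
  · rw [quotaShare, Measure.map_map measurable_fst (by fun_prop)]
    exact Measure.map_id
  · rw [← mem_ae_iff_prob_eq_one measurableSet_admissiblePairs]
    refine (ae_map_iff (by fun_prop) measurableSet_admissiblePairs).2 ?_
    filter_upwards [(mem_ae_iff_prob_eq_one measurableSet_Ici).2 hμ] with x hx
    exact ⟨mul_nonneg ha0 hx, mul_le_of_le_one_left hx ha1⟩

theorem mvar_map_snd_quotaShare (μ : Measure ℝ) (a : ℝ) :
    mvar ((quotaShare μ a).map Prod.snd) = a ^ 2 * mvar μ := by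
  rw [quotaShare, Measure.map_map measurable_snd (by fun_prop)]
  exact mvar_map_const_mul μ a

theorem mvar_map_sub_quotaShare (μ : Measure ℝ) (a : ℝ) :
    mvar ((quotaShare μ a).map fun q => q.1 - q.2) = (1 - a) ^ 2 * mvar μ := by
  have retained_eq : (fun q : ℝ × ℝ => q.1 - q.2) ∘ (fun x => (x, a * x)) = ((1 - a) * ·) := by
    funext x
    exact (one_sub_mul a x).symm
  rw [quotaShare, Measure.map_map (by fun_prop) (by fun_prop), retained_eq, mvar_map_const_mul]

/-- among all (possibly randomized) reinsurance treaties whose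
reinsured amount has variance `c`, the retained variance is at least
`(√V − √c)²` where `V = Var(μ) > 0`; equality holds for the quota-share treaty
`(Id, x ↦ a·x)_#μ` with `a = √(c/V)`, which is a treaty with reinsured
variance `c`. -/
theorem stmt14 (μ : Measure ℝ) [IsProbabilityMeasure μ]
    (hμ : μ (Ici 0) = 1)
    (hmom : Integrable (fun x : ℝ => x ^ 2) μ)
    (hV : 0 < mvar μ) (c : ℝ) (hc0 : 0 ≤ c) (hcV : c ≤ mvar μ) :
    (∀ η : Measure (ℝ × ℝ), IsProbabilityMeasure η → η.map Prod.fst = μ →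
      η {q : ℝ × ℝ | 0 ≤ q.2 ∧ q.2 ≤ q.1} = 1 →
      mvar (η.map Prod.snd) = c →
      (Real.sqrt (mvar μ) - Real.sqrt c) ^ 2 ≤ mvar (η.map fun q : ℝ × ℝ => q.1 - q.2)) ∧
    (μ.map fun x : ℝ => (x, Real.sqrt (c / mvar μ) * x)).map Prod.fst = μ ∧
    (μ.map fun x : ℝ => (x, Real.sqrt (c / mvar μ) * x))
      {q : ℝ × ℝ | 0 ≤ q.2 ∧ q.2 ≤ q.1} = 1 ∧
    mvar ((μ.map fun x : ℝ => (x, Real.sqrt (c / mvar μ) * x)).map Prod.snd) = c ∧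
    mvar ((μ.map fun x : ℝ => (x, Real.sqrt (c / mvar μ) * x)).map
      fun q : ℝ × ℝ => q.1 - q.2) = (Real.sqrt (mvar μ) - Real.sqrt c) ^ 2 := by
  have loss_memLp : MemLp id 2 μ := (memLp_two_iff_integrable_sq (by fun_prop)).2 hmom
  have share_le_one : √(c / mvar μ) ≤ 1 := Real.sqrt_le_one.2 ((div_le_one hV).2 hcV)
  have quotaShare_isTreaty := isTreaty_quotaShare hμ (Real.sqrt_nonneg _) share_le_one
  refine ⟨?_, quotaShare_isTreaty.map_fst, quotaShare_isTreaty.measure_admissiblePairs, ?_, ?_⟩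
  · rintro η η_prob η_fst η_admissible rfl
    exact IsTreaty_s14.sq_sqrt_mvar_sub_sqrt_mvar_le ⟨η_prob, η_fst, η_admissible⟩ loss_memLp
  · calc mvar ((quotaShare μ √(c / mvar μ)).map Prod.snd)
        = √(c / mvar μ) ^ 2 * mvar μ := mvar_map_snd_quotaShare μ _
      _ = c := by rw [Real.sq_sqrt (by positivity), div_mul_cancel₀ c hV.ne']
  · calc mvar ((quotaShare μ √(c / mvar μ)).map fun q => q.1 - q.2)
        = (1 - √(c / mvar μ)) ^ 2 * mvar μ := mvar_map_sub_quotaShare μ _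
      _ = ((1 - √(c / mvar μ)) * √(mvar μ)) ^ 2 := by rw [mul_pow, Real.sq_sqrt hV.le]
      _ = (√(mvar μ) - √c) ^ 2 := by
        rw [sub_mul, one_mul, Real.sqrt_div hc0, div_mul_cancel₀ _ (Real.sqrt_pos.2 hV).ne']
end
end
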